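/- Let L ∈ 𝓛, say L(A,B) = Σᵢ f(σᵢ) with f ∈ 𝓤, and let Γ̂_pos = Γ_pr − Σ_{i=1}^{r} (δᵢ²/(1+δᵢ²)) ŵᵢ ŵᵢᵀ. Then the minimum loss over 𝓜_r equals L(Γ̂_pos, Γ_pos) = r·f(1) + Σ_{i>r} f(1/(1+δᵢ²)). -/

import Mathlib

open Matrix MeasureTheory Polynomial Filter Finset

/-- `σ` enumerates (with multiplicity) the generalized eigenvalues of the pencil `(A, B)`,
i.e. the eigenvalues of `B⁻¹ * A`. -/
def IsGenEigs {n : ℕ} (A B : Matrix (Fin n) (Fin n) ℝ) (σ : Fin n → ℝ) : Prop :=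
  (B⁻¹ * A).charpoly = ∏ i : Fin n, (Polynomial.X - Polynomial.C (σ i))

/-- Membership in the class 𝓤. -/
def MemU (f : ℝ → ℝ) : Prop :=
  ∃ f' : ℝ → ℝ,
    (∀ x ∈ Set.Ioi (0:ℝ), HasDerivAt f (f' x) x) ∧
    ContinuousOn f' (Set.Ioi (0:ℝ)) ∧
    (∀ x ∈ Set.Ioi (0:ℝ), x ≠ 1 → f' x * (1 - x) < 0) ∧
    Filter.Tendsto f Filter.atTop Filter.atTop

/-- The approximation class `𝓜_r`. -/
def MClass {n : ℕ} (Γpr : Matrix (Fin n) (Fin n) ℝ) (r : ℕ) :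
    Set (Matrix (Fin n) (Fin n) ℝ) :=
  {M | ∃ K : Matrix (Fin n) (Fin n) ℝ, K.rank ≤ r ∧ M = Γpr - K * Kᵀ ∧ M.PosDef}

/-!
Congruence by an invertible matrix preserves generalized eigenvalues and maps `MClass Γ r` onto
`MClass (P * Γ * Pᵀ) r`. The rescaled eigenvectors `wᵢ / √(1 + δᵢ²)` therefore reduce the problem
to `Γpos = 1` and `Γpr = diagonal (1 + δ²)`, where the loss of an approximation `B` is
`∑ f (1 / τⱼ)` over the eigenvalues `τⱼ` of `B`. As `B` is a perturbation of `diagonal (1 + δ²)` of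
rank at most `r`, Weyl's inequality gives `τⱼ ≥ 1 + δ²ⱼ₊ᵣ`. Since `f` decreases on `(0, 1]`, this
bounds `n - r` of the terms below by `f (1 / (1 + δᵢ²))` with `i > r`; the other `r` terms are at
least the minimum `f 1`. Replacing the `r` largest diagonal entries by `1` attains both bounds.
-/

section WeylInequality

theorem exists_ne_zero_basis_repr_eq_zero {K V W : Type*} [Field K] [AddCommGroup V]
    [Module K V] [AddCommGroup W] [Module K W] {n : ℕ} (b c : Module.Basis (Fin n) K V)
    (R : V →ₗ[K] W) {j k : Fin n} (hR : j + Module.finrank K R.range ≤ k) :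
    ∃ x ≠ 0, R x = 0 ∧ (∀ i, k < i → b.repr x i = 0) ∧ ∀ i < j, c.repr x i = 0 := by
  have : FiniteDimensional K V := b.finiteDimensional_of_finite
  let L : V →ₗ[K] R.range × (Set.Ioi k → K) × (Set.Iio j → K) :=
    R.rangeRestrict.prod
      ((LinearMap.pi fun i : Set.Ioi k ↦ b.coord i).prod
        (LinearMap.pi fun i : Set.Iio j ↦ c.coord i))
  have hker : L.ker ≠ ⊥ := by
    apply LinearMap.ker_ne_bot_of_finrank_lt
    have hIoi : Fintype.card (Set.Ioi k) = n - 1 - k := by simp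
    have hIio : Fintype.card (Set.Iio j) = j := by simp
    rw [Module.finrank_prod, Module.finrank_prod, Module.finrank_fintype_fun_eq_card,
      Module.finrank_fintype_fun_eq_card, Module.finrank_eq_card_basis b, Fintype.card_fin, hIoi,
      hIio]
    omega
  obtain ⟨x, hxL, hx⟩ := Submodule.exists_mem_ne_zero_of_ne_bot hker
  simp only [L, LinearMap.ker_prod, LinearMap.ker_pi, LinearMap.ker_rangeRestrict,
    Submodule.mem_inf, Submodule.mem_iInf, LinearMap.mem_ker, Subtype.forall] at hxL
  exact ⟨x, hx, hxL⟩

variable {𝕜 E : Type*} [RCLike 𝕜] [NormedAddCommGroup E] [InnerProductSpace 𝕜 E]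
  [FiniteDimensional 𝕜 E] {n : ℕ} {T S : E →ₗ[𝕜] E}

theorem re_inner_apply_self_eq_sum_eigenvalues (hT : T.IsSymmetric)
    (hn : Module.finrank 𝕜 E = n) (x : E) :
    RCLike.re (inner 𝕜 (T x) x) =
      ∑ i, hT.eigenvalues hn i * ‖(hT.eigenvectorBasis hn).repr x i‖ ^ 2 := by
  rw [← (hT.eigenvectorBasis hn).repr.inner_map_map, PiLp.inner_apply, map_sum]
  refine Finset.sum_congr rfl fun i _ ↦ ?_
  rw [hT.eigenvectorBasis_apply_self_apply, ← smul_eq_mul, inner_smul_left, RCLike.conj_ofReal,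
    RCLike.re_ofReal_mul, inner_self_eq_norm_sq]

theorem eigenvalues_mul_norm_sq_le_re_inner (hT : T.IsSymmetric) (hn : Module.finrank 𝕜 E = n)
    {k : Fin n} {x : E} (hx : ∀ i, k < i → (hT.eigenvectorBasis hn).repr x i = 0) :
    hT.eigenvalues hn k * ‖x‖ ^ 2 ≤ RCLike.re (inner 𝕜 (T x) x) := by
  rw [re_inner_apply_self_eq_sum_eigenvalues hT hn,
    ← (hT.eigenvectorBasis hn).repr.norm_map, EuclideanSpace.norm_sq_eq, Finset.mul_sum]
  refine Finset.sum_le_sum fun i _ ↦ ?_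
  obtain hi | hi := lt_or_ge k i
  · simp [hx i hi]
  · gcongr
    exact hT.eigenvalues_antitone hn hi

theorem re_inner_le_eigenvalues_mul_norm_sq (hT : T.IsSymmetric) (hn : Module.finrank 𝕜 E = n)
    {j : Fin n} {x : E} (hx : ∀ i < j, (hT.eigenvectorBasis hn).repr x i = 0) :
    RCLike.re (inner 𝕜 (T x) x) ≤ hT.eigenvalues hn j * ‖x‖ ^ 2 := by
  rw [re_inner_apply_self_eq_sum_eigenvalues hT hn,
    ← (hT.eigenvectorBasis hn).repr.norm_map, EuclideanSpace.norm_sq_eq, Finset.mul_sum]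
  refine Finset.sum_le_sum fun i _ ↦ ?_
  obtain hi | hi := lt_or_ge i j
  · simp [hx i hi]
  · gcongr
    exact hT.eigenvalues_antitone hn hi

theorem eigenvalues_le_eigenvalues_of_finrank_range_sub_le (hT : T.IsSymmetric)
    (hS : S.IsSymmetric) (hn : Module.finrank 𝕜 E = n) {j k : Fin n}
    (hTS : j + Module.finrank 𝕜 (T - S).range ≤ k) :
    hT.eigenvalues hn k ≤ hS.eigenvalues hn j := by
  obtain ⟨x, hx, hTSx, hTx, hSx⟩ := exists_ne_zero_basis_repr_eq_zero
    (hT.eigenvectorBasis hn).toBasis (hS.eigenvectorBasis hn).toBasis (T - S) hTS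
  simp only [OrthonormalBasis.coe_toBasis_repr_apply] at hTx hSx
  refine le_of_mul_le_mul_right ?_ (show 0 < ‖x‖ ^ 2 by positivity)
  calc hT.eigenvalues hn k * ‖x‖ ^ 2 ≤ RCLike.re (inner 𝕜 (T x) x) :=
        eigenvalues_mul_norm_sq_le_re_inner hT hn hTx
    _ = RCLike.re (inner 𝕜 (S x) x) := by rw [sub_eq_zero.mp hTSx]
    _ ≤ hS.eigenvalues hn j * ‖x‖ ^ 2 := re_inner_le_eigenvalues_mul_norm_sq hS hn hSx

theorem eigenvalues_eq_of_antitone_of_roots_charpoly (hT : T.IsSymmetric)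
    (hn : Module.finrank 𝕜 E = n) {a : Fin n → ℝ} (ha : Antitone a)
    (hroots : T.charpoly.roots = Finset.univ.val.map fun i ↦ (a i : 𝕜)) :
    hT.eigenvalues hn = a := by
  rw [← List.ofFn_inj, ← hT.sort_roots_charpoly_eq_eigenvalues hn, hroots]
  simp_rw [Multiset.map_map, Function.comp_def, RCLike.ofReal_re, Fin.univ_val_map,
    Multiset.coe_sort]
  apply List.mergeSort_of_pairwise
  simpa only [decide_eq_true_eq, ← List.sortedGE_iff_pairwise] using ha.sortedGE_ofFn

end WeylInequality

section Roots

theorem roots_prod_X_sub_C_univ {ι R : Type*} [Fintype ι] [CommRing R] [IsDomain R]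
    (a : ι → R) : (∏ i, (X - C (a i))).roots = Finset.univ.val.map a := by
  have h := roots_multiset_prod_X_sub_C (Finset.univ.val.map a)
  rwa [Multiset.map_map] at h

theorem roots_charpoly_diagonal {ι R : Type*} [Fintype ι] [DecidableEq ι] [CommRing R]
    [IsDomain R] (a : ι → R) : (diagonal a).charpoly.roots = Finset.univ.val.map a := by
  rw [charpoly_diagonal, roots_prod_X_sub_C_univ]

theorem roots_charpoly_inv {ι 𝕜 : Type*} [Fintype ι] [DecidableEq ι] [RCLike 𝕜]
    {A : Matrix ι ι 𝕜} (hA : A.IsHermitian) (hA' : IsUnit A) :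
    A⁻¹.charpoly.roots = A.charpoly.roots.map (·⁻¹) := by
  let U := Unitary.conjStarAlgAut 𝕜 _ hA.eigenvectorUnitary
  have hne (i : ι) : (hA.eigenvalues i : 𝕜) ≠ 0 := by
    have hdet := ((isUnit_iff_isUnit_det A).mp hA').ne_zero
    rw [hA.det_eq_prod_eigenvalues] at hdet
    exact Finset.prod_ne_zero_iff.mp hdet i (Finset.mem_univ i)
  have hinv : A⁻¹ = U (diagonal fun i ↦ (hA.eigenvalues i : 𝕜)⁻¹) := by
    apply inv_eq_right_inv
    nth_rw 1 [hA.spectral_theorem]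
    rw [← map_mul, diagonal_mul_diagonal]
    simp [hne]
  rw [hinv, Unitary.conjStarAlgAut_apply, charpoly_mul_comm, ← mul_assoc,
    Unitary.coe_star_mul_self, one_mul, roots_charpoly_diagonal,
    hA.roots_charpoly_eq_eigenvalues, Multiset.map_map]
  rfl

theorem charpoly_toEuclideanLin {ι 𝕜 : Type*} [Fintype ι] [DecidableEq ι] [RCLike 𝕜]
    (A : Matrix ι ι 𝕜) : A.toEuclideanLin.charpoly = A.charpoly := by
  rw [show A.toEuclideanLin = _ from DFunLike.congr_fun (toLpLin_eq_toLin 2 2) A, charpoly_toLin]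

theorem finrank_range_toEuclideanLin {ι κ 𝕜 : Type*} [Finite ι] [Fintype κ] [DecidableEq κ]
    [RCLike 𝕜] (A : Matrix ι κ 𝕜) : Module.finrank 𝕜 A.toEuclideanLin.range = A.rank := by
  rw [show A.toEuclideanLin = _ from DFunLike.congr_fun (toLpLin_eq_toLin 2 2) A,
    ← rank_eq_finrank_range_toLin]

theorem exists_roots_charpoly_ge_of_rank_diagonal_sub_le {n r : ℕ} {d : Fin n → ℝ}
    (hd : Antitone d) {B : Matrix (Fin n) (Fin n) ℝ} (hB : B.IsHermitian)
    (hr : (diagonal d - B).rank ≤ r) :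
    ∃ τ : Fin n → ℝ, B.charpoly.roots = Finset.univ.val.map τ ∧
      ∀ j k : Fin n, j + r ≤ (k : ℕ) → d k ≤ τ j := by
  have hS := isSymmetric_toEuclideanLin_iff.mpr hB
  have hT := isSymmetric_toEuclideanLin_iff.mpr (isHermitian_diagonal d)
  have hn := finrank_euclideanSpace_fin (𝕜 := ℝ) (n := n)
  refine ⟨hS.eigenvalues hn, ?_, fun j k hjk ↦ ?_⟩
  · rw [← charpoly_toEuclideanLin, hS.roots_charpoly_eq_eigenvalues hn]
    rfl
  · have hd' : hT.eigenvalues hn = d := eigenvalues_eq_of_antitone_of_roots_charpoly hT hn hd <| by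
      rw [charpoly_toEuclideanLin, roots_charpoly_diagonal]
      rfl
    rw [← hd']
    apply eigenvalues_le_eigenvalues_of_finrank_range_sub_le
    rw [← map_sub, finrank_range_toEuclideanLin]
    omega

end Roots

section SpectralLoss

variable {ι : Type*} [Fintype ι] [DecidableEq ι]

/-- The loss `L(A, B) = ∑ f(σᵢ)` of the class 𝓛, the `σᵢ` being read off as the real roots of the
characteristic polynomial of `B⁻¹ * A`. For positive definite `A` and `B` that polynomial splits
over `ℝ`, so no generalized eigenvalue is lost. -/
noncomputable def spectralLoss (f : ℝ → ℝ) (A B : Matrix ι ι ℝ) : ℝ :=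
  ((B⁻¹ * A).charpoly.roots.map f).sum

theorem IsGenEigs.spectralLoss_eq {n : ℕ} {A B : Matrix (Fin n) (Fin n) ℝ} {σ : Fin n → ℝ}
    (hσ : IsGenEigs A B σ) (f : ℝ → ℝ) : spectralLoss f A B = ∑ i, f (σ i) := by
  rw [spectralLoss, hσ, roots_prod_X_sub_C_univ, Multiset.map_map]
  rfl

theorem spectralLoss_mul_mul_transpose (f : ℝ → ℝ) {P : Matrix ι ι ℝ} (hP : IsUnit P)
    (A B : Matrix ι ι ℝ) : spectralLoss f (P * A * Pᵀ) (P * B * Pᵀ) = spectralLoss f A B := by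
  have hP' : IsUnit P.det := (isUnit_iff_isUnit_det P).mp hP
  have hPt : IsUnit Pᵀ.det := by rwa [det_transpose]
  have hconj : (P * B * Pᵀ)⁻¹ * (P * A * Pᵀ) = Pᵀ⁻¹ * (B⁻¹ * A * Pᵀ) := by
    simp only [Matrix.mul_inv_rev, Matrix.mul_assoc, nonsing_inv_mul_cancel_left _ _ hP']
  rw [spectralLoss, hconj, charpoly_mul_comm, mul_nonsing_inv_cancel_right _ _ hPt, spectralLoss]

theorem spectralLoss_one_left (f : ℝ → ℝ) {B : Matrix ι ι ℝ} (hB : B.IsHermitian)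
    (hB' : IsUnit B) : spectralLoss f 1 B = (B.charpoly.roots.map fun t ↦ f (1 / t)).sum := by
  simp only [spectralLoss, Matrix.mul_one, roots_charpoly_inv hB hB', Multiset.map_map,
    Function.comp_def, one_div]

theorem spectralLoss_one_diagonal (f : ℝ → ℝ) {d : ι → ℝ} (hd : ∀ i, d i ≠ 0) :
    spectralLoss f 1 (diagonal d) = ∑ i, f (1 / d i) := by
  rw [spectralLoss_one_left f (isHermitian_diagonal d)
    (isUnit_diagonal.mpr (Pi.isUnit_iff.mpr fun i ↦ (hd i).isUnit)), roots_charpoly_diagonal,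
    Multiset.map_map]
  rfl

end SpectralLoss

section ApproximationClass

variable {n r : ℕ} {P M Γ : Matrix (Fin n) (Fin n) ℝ}

theorem mul_mul_transpose_mem_MClass (hP : IsUnit P) (hM : M ∈ MClass Γ r) :
    P * M * Pᵀ ∈ MClass (P * Γ * Pᵀ) r := by
  obtain ⟨K, hK, rfl, hpos⟩ := hM
  refine ⟨P * K, (rank_mul_le_right P K).trans hK, ?_, ?_⟩
  · simp only [transpose_mul, Matrix.mul_sub, Matrix.sub_mul, Matrix.mul_assoc]
  · simpa only [star_eq_conjTranspose, conjTranspose_eq_transpose_of_trivial] using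
      hP.posDef_star_right_conjugate_iff.mpr hpos

theorem MClass_mul_mul_transpose (hP : IsUnit P) (Γ : Matrix (Fin n) (Fin n) ℝ) (r : ℕ) :
    MClass (P * Γ * Pᵀ) r = (fun M ↦ P * M * Pᵀ) '' MClass Γ r := by
  have hP' : IsUnit P.det := (isUnit_iff_isUnit_det P).mp hP
  have hPt : IsUnit Pᵀ.det := by rwa [det_transpose]
  refine Set.Subset.antisymm (fun M hM ↦ ?_)
    (Set.image_subset_iff.mpr fun M ↦ mul_mul_transpose_mem_MClass hP)
  refine ⟨P⁻¹ * M * P⁻¹ᵀ, ?_, ?_⟩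
  · convert mul_mul_transpose_mem_MClass (isUnit_nonsing_inv_iff.mpr hP) hM using 1
    simp only [transpose_nonsing_inv, Matrix.mul_assoc, mul_nonsing_inv _ hPt,
      nonsing_inv_mul_cancel_left _ _ hP', Matrix.mul_one]
  · simp only [transpose_nonsing_inv, Matrix.mul_assoc, nonsing_inv_mul _ hPt,
      mul_nonsing_inv_cancel_left _ _ hP', Matrix.mul_one]

end ApproximationClass

section DiagonalPrior

theorem nsmul_add_sum_le_sum_of_shift_le {M : Type*} [AddCommMonoid M] [PartialOrder M]
    [IsOrderedAddMonoid M] {n r : ℕ} (hr : r ≤ n) {a b : Fin n → M} {c : M} (hc : ∀ i, c ≤ a i)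
    (hab : ∀ j k : Fin n, (k : ℕ) = j + r → b k ≤ a j) :
    r • c + ∑ i : Fin n with r ≤ i.val, b i ≤ ∑ i, a i := by
  obtain ⟨p, rfl⟩ : ∃ p, n = p + r := ⟨n - r, by omega⟩
  have hshift : ∑ i : Fin (p + r) with r ≤ i.val, b i = ∑ j : Fin p, b (j.addNat r) := by
    symm
    refine Finset.sum_bij (fun j _ ↦ j.addNat r) (by simp) (by simp) (fun i hi ↦ ?_) (by simp)
    rw [Finset.mem_filter_univ] at hi
    exact ⟨i.subNat r hi, Finset.mem_univ _, Fin.addNat_subNat hi⟩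
  rw [Fin.sum_univ_add, add_comm, hshift]
  gcongr with j
  · exact hab _ _ (by simp)
  · simpa using Finset.card_nsmul_le_sum Finset.univ (fun i : Fin r ↦ a (Fin.natAdd p i)) c
      fun i _ ↦ hc _

/-- Replaces the first `r` entries of `d` by `1`. For `d = 1 + δ²` this is the diagonal of the
optimal approximation `Γ̂pos` in coordinates in which `Γpos = 1` and `Γpr = diagonal d`. -/
def flattenLeading {n : ℕ} (r : ℕ) (d : Fin n → ℝ) (i : Fin n) : ℝ :=
  if (i : ℕ) < r then 1 else d i

variable {n r : ℕ} {d : Fin n → ℝ}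

theorem flattenLeading_pos (hd : ∀ i, 0 < d i) (i : Fin n) : 0 < flattenLeading r d i := by
  unfold flattenLeading
  split_ifs
  exacts [one_pos, hd i]

theorem diagonal_flattenLeading_mem_MClass (hd : ∀ i, 1 ≤ d i) :
    diagonal (flattenLeading r d) ∈ MClass (diagonal d) r := by
  let k (i : Fin n) : ℝ := if (i : ℕ) < r then √(d i - 1) else 0
  refine ⟨diagonal k, ?_, ?_, ?_⟩
  · rw [rank_diagonal, Fintype.card_subtype]
    calc #{i | k i ≠ 0} ≤ #{i : Fin n | (i : ℕ) < r} :=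
          Finset.card_le_card <| Finset.monotone_filter_right _ fun i _ hi ↦ by
            by_contra hir
            exact hi (if_neg hir)
      _ ≤ r := by rw [Fin.card_filter_val_lt]; exact min_le_right n r
  · rw [diagonal_transpose, diagonal_mul_diagonal, diagonal_sub]
    congr 1
    ext i
    simp only [flattenLeading, k]
    split_ifs
    · rw [Real.mul_self_sqrt (sub_nonneg.mpr (hd i)), sub_sub_cancel]
    · simp
  · exact posDef_diagonal_iff.mpr (flattenLeading_pos fun i ↦ one_pos.trans_le (hd i))

theorem spectralLoss_one_diagonal_flattenLeading (hr : r ≤ n) (f : ℝ → ℝ) (hd : ∀ i, 0 < d i) :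
    spectralLoss f 1 (diagonal (flattenLeading r d)) =
      r * f 1 + ∑ i : Fin n with r ≤ i.val, f (1 / d i) := by
  rw [spectralLoss_one_diagonal f fun i ↦ (flattenLeading_pos hd i).ne',
    ← Finset.sum_filter_add_sum_filter_not _ fun i : Fin n ↦ (i : ℕ) < r]
  simp only [not_lt]
  congr 1
  · rw [Finset.sum_congr rfl (g := fun _ ↦ f 1) fun i hi ↦ by
      simp [flattenLeading, (Finset.mem_filter_univ i).mp hi], Finset.sum_const,
      Fin.card_filter_val_lt, min_eq_right hr, nsmul_eq_mul]
  · refine Finset.sum_congr rfl fun i hi ↦ ?_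
    rw [flattenLeading, if_neg ((Finset.mem_filter_univ i).mp hi).not_gt]

theorem le_spectralLoss_one_of_mem_MClass_diagonal (hr : r ≤ n) {f : ℝ → ℝ}
    (hf : AntitoneOn f (Set.Ioc 0 1)) (hf₁ : IsMinOn f (Set.Ioi 0) 1) (hd : Antitone d)
    (hd₁ : ∀ i, 1 ≤ d i) {B : Matrix (Fin n) (Fin n) ℝ} (hB : B ∈ MClass (diagonal d) r) :
    r * f 1 + ∑ i : Fin n with r ≤ i.val, f (1 / d i) ≤ spectralLoss f 1 B := by
  obtain ⟨K, hK, hBK, hpos⟩ := hB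
  have hrank : (diagonal d - B).rank ≤ r := by
    rw [hBK, sub_sub_cancel]
    exact (rank_mul_le_left K Kᵀ).trans hK
  obtain ⟨τ, hroots, hτ⟩ := exists_roots_charpoly_ge_of_rank_diagonal_sub_le hd hpos.1 hrank
  have hτ₀ (i : Fin n) : 0 < τ i := by
    have hi : τ i ∈ B.charpoly.roots := hroots ▸ Multiset.mem_map_of_mem τ (Finset.mem_univ i)
    rw [hpos.1.roots_charpoly_eq_eigenvalues] at hi
    obtain ⟨j, -, hj⟩ := Multiset.mem_map.mp hi
    exact hj ▸ hpos.eigenvalues_pos j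
  rw [spectralLoss_one_left f hpos.1 hpos.isUnit, hroots, Multiset.map_map, ← nsmul_eq_mul]
  refine nsmul_add_sum_le_sum_of_shift_le hr
    (fun i ↦ isMinOn_iff.mp hf₁ _ (Set.mem_Ioi.mpr (one_div_pos.mpr (hτ₀ i)))) fun j k hjk ↦ ?_
  have hdk : 0 < d k := one_pos.trans_le (hd₁ k)
  have hle : 1 / τ j ≤ 1 / d k := one_div_le_one_div_of_le hdk (hτ j k hjk.ge)
  have hdk₁ : 1 / d k ≤ 1 := (div_le_one hdk).mpr (hd₁ k)
  exact hf ⟨one_div_pos.mpr (hτ₀ j), hle.trans hdk₁⟩ ⟨one_div_pos.mpr hdk, hdk₁⟩ hle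

end DiagonalPrior

section Whitening

variable {ι : Type*} [Fintype ι] [DecidableEq ι]

theorem inv_eq_mul_inv_mul_transpose {V A D : Matrix ι ι ℝ} (hV : IsUnit V)
    (h : Vᵀ * A * V = D) : A⁻¹ = V * D⁻¹ * Vᵀ := by
  have hV' : IsUnit V.det := (isUnit_iff_isUnit_det V).mp hV
  have hVt : IsUnit Vᵀ.det := by rwa [det_transpose]
  rw [← h, Matrix.mul_inv_rev, Matrix.mul_inv_rev, mul_nonsing_inv_cancel_left _ _ hV',
    nonsing_inv_mul_cancel_right _ _ hVt]

/-- The matrix with columns `wᵢ / √(1 + μᵢ)`. If the `wᵢ` are prior-orthonormal generalized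
eigenvectors of the Hessian with eigenvalues `μᵢ = δᵢ²`, these columns are orthonormal for the
posterior precision, so that in the coordinates they define `Γpos = 1` and `Γpr` is diagonal. -/
noncomputable def whitening (μ : ι → ℝ) (w : ι → ι → ℝ) : Matrix ι ι ℝ :=
  (of w)ᵀ * diagonal fun i ↦ (√(1 + μ i))⁻¹

theorem of_mul_mul_transpose_eq_diagonal {w : ι → ι → ℝ} {M : Matrix ι ι ℝ} {c : ι → ℝ}
    (hM : ∀ i j, w i ⬝ᵥ (M *ᵥ w j) = if i = j then c i else 0) :
    of w * M * (of w)ᵀ = diagonal c := by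
  ext i j
  rw [Matrix.mul_assoc, diagonal_apply, ← hM i j]
  rfl

variable {μ : ι → ℝ} {w : ι → ι → ℝ} (hμ : ∀ i, 0 < 1 + μ i)

include hμ

theorem whitening_transpose_mul_mul {M : Matrix ι ι ℝ} {c : ι → ℝ}
    (hM : ∀ i j, w i ⬝ᵥ (M *ᵥ w j) = if i = j then c i else 0) :
    (whitening μ w)ᵀ * M * whitening μ w = diagonal fun i ↦ c i / (1 + μ i) := by
  have hassoc : (whitening μ w)ᵀ * M * whitening μ w =
      diagonal (fun i ↦ (√(1 + μ i))⁻¹) * (of w * M * (of w)ᵀ) *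
        diagonal fun i ↦ (√(1 + μ i))⁻¹ := by
    simp only [whitening, transpose_mul, diagonal_transpose, transpose_transpose,
      Matrix.mul_assoc]
  rw [hassoc, of_mul_mul_transpose_eq_diagonal hM, diagonal_mul_diagonal, diagonal_mul_diagonal]
  congr 1
  ext i
  rw [mul_right_comm, ← mul_inv, Real.mul_self_sqrt (hμ i).le, inv_mul_eq_div]

theorem whitening_mul_diagonal_mul_transpose (a : ι → ℝ) :
    whitening μ w * diagonal a * (whitening μ w)ᵀ =
      ∑ i, (a i / (1 + μ i)) • vecMulVec (w i) (w i) := by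
  ext p q
  rw [Matrix.mul_apply, Matrix.sum_apply]
  refine Finset.sum_congr rfl fun i _ ↦ ?_
  rw [Matrix.smul_apply, vecMulVec_apply, ← Real.mul_self_sqrt (hμ i).le]
  simp only [whitening, mul_diagonal, transpose_apply, of_apply, smul_eq_mul]
  ring

theorem isUnit_whitening {M : Matrix ι ι ℝ}
    (hnorm : ∀ i j, w i ⬝ᵥ (M *ᵥ w j) = if i = j then 1 else 0) : IsUnit (whitening μ w) := by
  have hw : of w * M * (of w)ᵀ = 1 := of_mul_mul_transpose_eq_diagonal hnorm
  refine .mul ((isUnit_iff_isUnit_det _).mpr (isUnit_det_of_left_inverse hw)) ?_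
  exact isUnit_diagonal.mpr <| Pi.isUnit_iff.mpr fun i ↦
    (inv_pos.mpr (Real.sqrt_pos.mpr (hμ i))).ne'.isUnit

variable {H Γ : Matrix ι ι ℝ} (hnorm : ∀ i j, w i ⬝ᵥ (Γ⁻¹ *ᵥ w j) = if i = j then 1 else 0)

include hnorm

theorem posterior_eq_whitening_mul_transpose (heig : ∀ i, H *ᵥ w i = μ i • (Γ⁻¹ *ᵥ w i)) :
    (H + Γ⁻¹)⁻¹ = whitening μ w * 1 * (whitening μ w)ᵀ := by
  have hgram (i j : ι) : w i ⬝ᵥ ((H + Γ⁻¹) *ᵥ w j) = if i = j then 1 + μ i else 0 := by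
    rw [add_mulVec, heig, dotProduct_add, dotProduct_smul, hnorm]
    split_ifs with hij
    · rw [hij, smul_eq_mul, mul_one, add_comm]
    · rw [smul_zero, add_zero]
  have hprecision : (whitening μ w)ᵀ * (H + Γ⁻¹) * whitening μ w = 1 := by
    simp only [whitening_transpose_mul_mul hμ hgram, div_self (hμ _).ne', diagonal_one]
  rw [inv_eq_mul_inv_mul_transpose (isUnit_whitening hμ hnorm) hprecision, inv_one]

theorem prior_eq_whitening_mul_diagonal_mul_transpose (hΓ : IsUnit Γ) :
    Γ = whitening μ w * diagonal (fun i ↦ 1 + μ i) * (whitening μ w)ᵀ := by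
  have hinv : (diagonal fun i ↦ 1 / (1 + μ i))⁻¹ = diagonal fun i ↦ 1 + μ i :=
    inv_eq_right_inv <| by
      simp only [diagonal_mul_diagonal, one_div_mul_cancel (hμ _).ne', diagonal_one]
  rw [← hinv, ← inv_eq_mul_inv_mul_transpose (isUnit_whitening hμ hnorm)
    (whitening_transpose_mul_mul hμ hnorm),
    nonsing_inv_nonsing_inv _ ((isUnit_iff_isUnit_det Γ).mp hΓ)]

end Whitening

theorem prior_sub_sum_eq_whitening_mul_flattenLeading {n : ℕ} (r : ℕ)
    {Γ : Matrix (Fin n) (Fin n) ℝ} {μ : Fin n → ℝ} {w : Fin n → Fin n → ℝ}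
    (hμ : ∀ i, 0 < 1 + μ i) (hnorm : ∀ i j, w i ⬝ᵥ (Γ⁻¹ *ᵥ w j) = if i = j then 1 else 0)
    (hΓ : IsUnit Γ) :
    Γ - ∑ i : Fin n with i.val < r, (μ i / (1 + μ i)) • vecMulVec (w i) (w i) =
      whitening μ w * diagonal (flattenLeading r fun i ↦ 1 + μ i) * (whitening μ w)ᵀ := by
  nth_rw 1 [prior_eq_whitening_mul_diagonal_mul_transpose hμ hnorm hΓ]
  rw [sub_eq_iff_eq_add, whitening_mul_diagonal_mul_transpose hμ,
    whitening_mul_diagonal_mul_transpose hμ, Finset.sum_filter, ← Finset.sum_add_distrib]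
  refine Finset.sum_congr rfl fun i _ ↦ ?_
  unfold flattenLeading
  split_ifs
  · rw [← add_smul, add_div]
  · rw [add_zero]

section LossFunctions

variable {f : ℝ → ℝ}

theorem MemU.antitoneOn (hf : MemU f) : AntitoneOn f (Set.Ioc 0 1) := by
  obtain ⟨f', hderiv, -, hsign, -⟩ := hf
  refine (strictAntiOn_of_deriv_neg (convex_Ioc 0 1)
    (fun x hx ↦ (hderiv x hx.1).continuousAt.continuousWithinAt) fun x hx ↦ ?_).antitoneOn
  rw [interior_Ioc] at hx
  rw [(hderiv x hx.1).deriv]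
  exact neg_of_mul_neg_left (hsign x hx.1 hx.2.ne) (sub_nonneg.mpr hx.2.le)

theorem MemU.monotoneOn (hf : MemU f) : MonotoneOn f (Set.Ici 1) := by
  obtain ⟨f', hderiv, -, hsign, -⟩ := hf
  have hpos {x : ℝ} (hx : 1 ≤ x) : x ∈ Set.Ioi 0 := one_pos.trans_le hx
  refine (strictMonoOn_of_deriv_pos (convex_Ici 1)
    (fun x hx ↦ (hderiv x (hpos hx)).continuousAt.continuousWithinAt) fun x hx ↦ ?_).monotoneOn
  rw [interior_Ici, Set.mem_Ioi] at hx
  rw [(hderiv x (hpos hx.le)).deriv]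
  exact pos_of_mul_neg_left (hsign x (hpos hx.le) hx.ne') (sub_nonpos.mpr hx.le)

theorem MemU.isMinOn (hf : MemU f) : IsMinOn f (Set.Ioi 0) 1 := fun x hx ↦
  (le_total x 1).elim (fun h ↦ hf.antitoneOn ⟨hx, h⟩ ⟨one_pos, le_rfl⟩ h)
    fun h ↦ hf.monotoneOn Set.self_mem_Ici h h

end LossFunctions

theorem minimum_loss_posterior_covariance_approx_general {n r : ℕ} (hr : r ≤ n)
    {H Γpr : Matrix (Fin n) (Fin n) ℝ} (hpr : Γpr.PosDef) {μ : Fin n → ℝ}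
    {w : Fin n → Fin n → ℝ} (hμ : ∀ i, 0 ≤ μ i) (hord : Antitone μ)
    (heig : ∀ i, H *ᵥ w i = μ i • (Γpr⁻¹ *ᵥ w i))
    (hnorm : ∀ i j, w i ⬝ᵥ (Γpr⁻¹ *ᵥ w j) = if i = j then 1 else 0)
    {f : ℝ → ℝ} (hf : AntitoneOn f (Set.Ioc 0 1)) (hf₁ : IsMinOn f (Set.Ioi 0) 1)
    {Γpos Γhat : Matrix (Fin n) (Fin n) ℝ} (hΓpos : Γpos = (H + Γpr⁻¹)⁻¹)
    (hΓhat : Γhat = Γpr - ∑ i : Fin n with i.val < r, (μ i / (1 + μ i)) • vecMulVec (w i) (w i)) :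
    Γhat ∈ MClass Γpr r ∧
      spectralLoss f Γpos Γhat = r * f 1 + ∑ i : Fin n with r ≤ i.val, f (1 / (1 + μ i)) ∧
      ∀ Γt ∈ MClass Γpr r,
        r * f 1 + ∑ i : Fin n with r ≤ i.val, f (1 / (1 + μ i)) ≤ spectralLoss f Γpos Γt := by
  have hd (i : Fin n) : 1 ≤ 1 + μ i := le_add_of_nonneg_right (hμ i)
  have hd₀ (i : Fin n) : 0 < 1 + μ i := one_pos.trans_le (hd i)
  have hV := isUnit_whitening hd₀ hnorm
  rw [prior_sub_sum_eq_whitening_mul_flattenLeading r hd₀ hnorm hpr.isUnit] at hΓhat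
  rw [posterior_eq_whitening_mul_transpose hd₀ hnorm heig] at hΓpos
  rw [hΓpos, hΓhat, prior_eq_whitening_mul_diagonal_mul_transpose hd₀ hnorm hpr.isUnit,
    MClass_mul_mul_transpose hV, Set.forall_mem_image]
  simp only [spectralLoss_mul_mul_transpose f hV]
  exact ⟨Set.mem_image_of_mem _ (diagonal_flattenLeading_mem_MClass hd),
    spectralLoss_one_diagonal_flattenLeading hr f hd₀,
    fun _ ↦ le_spectralLoss_one_of_mem_MClass_diagonal hr hf hf₁
      (fun i j hij ↦ add_le_add_right (hord hij) 1) hd⟩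

/-- The minimum loss over `𝓜_r` equals
`L(Γ̂pos, Γpos) = r·f(1) + Σ_{i>r} f(1/(1+δᵢ²))`. -/
theorem minimum_loss_posterior_covariance_approx
    (n m r : ℕ) (hn : 0 < n) (hm : 0 < m) (hr : r ≤ n)
    (G : Matrix (Fin m) (Fin n) ℝ)
    (Γobs : Matrix (Fin m) (Fin m) ℝ) (hobs : Γobs.PosDef)
    (Γpr : Matrix (Fin n) (Fin n) ℝ) (hpr : Γpr.PosDef)
    (H Γpos : Matrix (Fin n) (Fin n) ℝ)
    (hH : H = Gᵀ * Γobs⁻¹ * G)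
    (hΓpos : Γpos = (H + Γpr⁻¹)⁻¹)
    (δ : Fin n → ℝ) (w : Fin n → Fin n → ℝ)
    (hδ : ∀ i, 0 ≤ δ i)
    (hord : ∀ i j : Fin n, i ≤ j → (δ j) ^ 2 ≤ (δ i) ^ 2)
    (heig : ∀ i, H *ᵥ w i = (δ i) ^ 2 • (Γpr⁻¹ *ᵥ w i))
    (hnorm : ∀ i j, w i ⬝ᵥ (Γpr⁻¹ *ᵥ w j) = if i = j then (1:ℝ) else 0)
    (f : ℝ → ℝ) (hf : MemU f)
    (Γhat : Matrix (Fin n) (Fin n) ℝ)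
    (hΓhat : Γhat = Γpr - ∑ i ∈ Finset.univ.filter (fun i : Fin n => (i : ℕ) < r),
      ((δ i) ^ 2 / (1 + (δ i) ^ 2)) • vecMulVec (w i) (w i)) :
    (∀ σ : Fin n → ℝ, IsGenEigs Γpos Γhat σ →
      ∑ i, f (σ i) =
        (r : ℝ) * f 1 +
          ∑ i ∈ Finset.univ.filter (fun i : Fin n => r ≤ (i : ℕ)),
            f (1 / (1 + (δ i) ^ 2))) ∧
    (∀ Γt ∈ MClass Γpr r, ∀ σ' : Fin n → ℝ, IsGenEigs Γpos Γt σ' →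
      (r : ℝ) * f 1 +
          ∑ i ∈ Finset.univ.filter (fun i : Fin n => r ≤ (i : ℕ)),
            f (1 / (1 + (δ i) ^ 2)) ≤ ∑ i, f (σ' i)) := by
  subst hH
  obtain ⟨-, hval, hmin⟩ := minimum_loss_posterior_covariance_approx_general hr hpr
    (fun i ↦ sq_nonneg (δ i)) hord heig hnorm hf.antitoneOn hf.isMinOn hΓpos hΓhat
  exact ⟨fun σ hσ ↦ hσ.spectralLoss_eq f ▸ hval, fun Γt hΓt σ' hσ' ↦
    hσ'.spectralLoss_eq f ▸ hmin Γt hΓt⟩
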